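/- Every zero-free sequence of length greater than n/2 in the cyclic group Z/nZ is behaving with respect to one of its terms: there is a term a of the sequence and positive integers s_1,...,s_ℓ with s_1 + ... + s_ℓ < ord(a) such that the sequence equals (s_1·a, ..., s_ℓ·a) up to reordering and (s_1,...,s_ℓ) has sumset {1,2,...,s_1+...+s_ℓ}. -/

import Mathlib

/-- A list in an additive commutative group is zero-free if no nonempty
sublist sums to zero. -/
def ZeroFree {G : Type*} [AddCommGroup G] (l : List G) : Prop :=
  ∀ t : List G, t.Sublist l → t ≠ [] → t.sum ≠ 0

/-- The sumset of a list: all sums of nonempty sublists. -/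
def sumset {G : Type*} [AddCommGroup G] (l : List G) : Set G :=
  {x | ∃ t : List G, t.Sublist l ∧ t ≠ [] ∧ t.sum = x}

/-- The sumset of a list of natural numbers: all sums of nonempty sublists. -/
def sumsetN (l : List ℕ) : Set ℕ :=
  {x | ∃ t : List ℕ, t.Sublist l ∧ t ≠ [] ∧ t.sum = x}

/-!
Count the subsequence sums, the empty one included. A zero-free sequence of length `ℓ > n / 2` has
at most `n < 2 * ℓ` of them, and this bound, in any abelian group, is enough to induct on `ℓ`.

If removing some term `b` loses at least two sums, the remaining sequence inherits the bound, so it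
is behaving with respect to one of its terms `a` and its sums are `0, a, …, S • a`. Being zero-free
of length `ℓ - 1`, it has at least `ℓ` sums, too many for the translate by `b` to be disjoint from
them. Hence `b = d • a` for some `1 ≤ d ≤ S`, and adjoining `d` to the coefficients keeps their sums
an interval.

If removing any term loses exactly one sum, the lost sum is always the total, and translating the
remaining sums by the removed term always yields all nonzero sums. This forces all terms to be
equal.
-/

open Finset
open scoped Pointwise

section SubsetSums

variable {M N : Type*} [AddCommMonoid M] [DecidableEq M] [AddCommMonoid N] [DecidableEq N]

/-- The set of sums of all submultisets of `m`. Unlike in `sumset`, the empty sum is included, so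
that adjoining a term `b` to `m` adjoins the translate by `b`. -/
def subsetSums (m : Multiset M) : Finset M :=
  (m.powerset.map Multiset.sum).toFinset

theorem mem_subsetSums {m : Multiset M} {x : M} : x ∈ subsetSums m ↔ ∃ t ≤ m, t.sum = x := by
  simp [subsetSums]

theorem zero_mem_subsetSums (m : Multiset M) : 0 ∈ subsetSums m :=
  mem_subsetSums.2 ⟨0, m.zero_le, Multiset.sum_zero⟩

theorem sum_mem_subsetSums (m : Multiset M) : m.sum ∈ subsetSums m :=
  mem_subsetSums.2 ⟨m, le_rfl, rfl⟩

theorem subsetSums_zero : subsetSums (0 : Multiset M) = {0} := by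
  simp [subsetSums]

theorem subsetSums_cons (b : M) (m : Multiset M) :
    subsetSums (b ::ₘ m) = subsetSums m ∪ (b +ᵥ subsetSums m) := by
  ext x
  simp [subsetSums, mem_vadd_finset]

theorem subsetSums_subset_cons (b : M) (m : Multiset M) :
    subsetSums m ⊆ subsetSums (b ::ₘ m) := by
  rw [subsetSums_cons]
  exact subset_union_left

theorem vadd_subsetSums_subset_cons (b : M) (m : Multiset M) :
    b +ᵥ subsetSums m ⊆ subsetSums (b ::ₘ m) := by
  rw [subsetSums_cons]
  exact subset_union_right

theorem subsetSums_map (f : M →+ N) (m : Multiset M) :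
    subsetSums (m.map f) = (subsetSums m).image f := by
  induction m using Multiset.induction with
  | empty => simp [subsetSums_zero]
  | cons b m ih =>
    rw [Multiset.map_cons, subsetSums_cons, subsetSums_cons, ih, image_union,
      ← image_vadd_distrib]

theorem coe_subsetSums_coe (l : List M) :
    (subsetSums (l : Multiset M) : Set M) =
      insert 0 {x | ∃ t : List M, t.Sublist l ∧ t ≠ [] ∧ t.sum = x} := by
  ext x
  simp only [mem_coe, mem_subsetSums, Set.mem_insert_iff, Set.mem_ofPred_eq]
  constructor
  · rintro ⟨t, ht, rfl⟩
    obtain ⟨u, rfl⟩ := Quotient.exists_rep t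
    obtain ⟨v, hvu, hvl⟩ := Multiset.coe_le.1 ht
    rcases eq_or_ne v [] with rfl | hv
    · exact .inl hvu.sum_eq.symm
    · exact .inr ⟨v, hvl, hv, hvu.sum_eq⟩
  · rintro (rfl | ⟨t, htl, -, rfl⟩)
    · exact ⟨0, Multiset.zero_le _, Multiset.sum_zero⟩
    · exact ⟨t, Multiset.coe_le.2 htl.subperm, Multiset.sum_coe t⟩

end SubsetSums

section ZeroSumFree

variable {G : Type*} [AddCommGroup G]

/-- The multiset form of `ZeroFree`: no nonempty submultiset sums to zero. -/
def IsZeroSumFree (m : Multiset G) : Prop :=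
  ∀ t ≤ m, t ≠ 0 → t.sum ≠ 0

theorem ZeroFree.isZeroSumFree_coe {l : List G} (h : ZeroFree l) :
    IsZeroSumFree (l : Multiset G) := by
  intro t ht ht0 hsum
  obtain ⟨u, rfl⟩ := Quotient.exists_rep t
  obtain ⟨v, hvu, hvl⟩ := Multiset.coe_le.1 ht
  refine h v hvl ?_ (hvu.sum_eq.trans hsum)
  rintro rfl
  exact ht0 (Multiset.coe_eq_coe.2 hvu.symm)

namespace IsZeroSumFree

variable {a b : G} {m : Multiset G}

theorem mono {m' : Multiset G} (h : IsZeroSumFree m) (hle : m' ≤ m) : IsZeroSumFree m' :=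
  fun t ht ↦ h t (ht.trans hle)

variable [DecidableEq G]

theorem neg_notMem_subsetSums (h : IsZeroSumFree (b ::ₘ m)) : -b ∉ subsetSums m := by
  rw [mem_subsetSums]
  rintro ⟨t, ht, hsum⟩
  refine h (b ::ₘ t) (Multiset.cons_le_cons b ht) Multiset.cons_ne_zero ?_
  rw [Multiset.sum_cons, hsum, add_neg_cancel]

theorem sum_cons_notMem_subsetSums (h : IsZeroSumFree (b ::ₘ m)) :
    (b ::ₘ m).sum ∉ subsetSums m := by
  rw [mem_subsetSums]
  rintro ⟨t, ht, hsum⟩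
  obtain ⟨u, rfl⟩ := Multiset.le_iff_exists_add.1 ht
  refine h (b ::ₘ u) (Multiset.cons_le_cons b (Multiset.le_add_left u t))
    Multiset.cons_ne_zero ?_
  rwa [← Multiset.add_cons, Multiset.sum_add, left_eq_add] at hsum

theorem subsetSums_subset_erase_sum (h : IsZeroSumFree (b ::ₘ m)) :
    subsetSums m ⊆ (subsetSums (b ::ₘ m)).erase (b ::ₘ m).sum :=
  subset_erase.2 ⟨subsetSums_subset_cons b m, h.sum_cons_notMem_subsetSums⟩

theorem vadd_subsetSums_subset_erase_zero (h : IsZeroSumFree (b ::ₘ m)) :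
    b +ᵥ subsetSums m ⊆ (subsetSums (b ::ₘ m)).erase 0 := by
  refine subset_erase.2 ⟨vadd_subsetSums_subset_cons b m, fun h0 ↦ h.neg_notMem_subsetSums ?_⟩
  simpa using neg_vadd_mem_iff.2 h0

theorem card_lt_card_subsetSums (h : IsZeroSumFree m) : m.card < #(subsetSums m) := by
  induction m using Multiset.induction with
  | empty => simp [subsetSums_zero]
  | cons b m ih =>
    have hgrow : #(subsetSums m) < #(subsetSums (b ::ₘ m)) :=
      card_lt_card <|
        h.subsetSums_subset_erase_sum.trans_ssubset (erase_ssubset (sum_mem_subsetSums _))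
    have := ih (h.mono (Multiset.le_cons_self m b))
    rw [Multiset.card_cons]
    omega

theorem subsetSums_eq_erase_sum (h : IsZeroSumFree (b ::ₘ m))
    (hcard : #(subsetSums (b ::ₘ m)) ≤ #(subsetSums m) + 1) :
    subsetSums m = (subsetSums (b ::ₘ m)).erase (b ::ₘ m).sum := by
  refine eq_of_subset_of_card_le h.subsetSums_subset_erase_sum ?_
  rw [card_erase_of_mem (sum_mem_subsetSums _)]
  omega

theorem vadd_subsetSums_eq_erase_zero (h : IsZeroSumFree (b ::ₘ m))
    (hcard : #(subsetSums (b ::ₘ m)) ≤ #(subsetSums m) + 1) :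
    b +ᵥ subsetSums m = (subsetSums (b ::ₘ m)).erase 0 := by
  refine eq_of_subset_of_card_le h.vadd_subsetSums_subset_erase_zero ?_
  rw [card_erase_of_mem (zero_mem_subsetSums _), card_vadd_finset]
  omega

theorem eq_of_cons_eq_cons {ma mb : Multiset G} (hma : m = a ::ₘ ma) (hmb : m = b ::ₘ mb)
    (h : IsZeroSumFree m) (ha : #(subsetSums m) ≤ #(subsetSums ma) + 1)
    (hb : #(subsetSums m) ≤ #(subsetSums mb) + 1) : a = b := by
  have sums_a : subsetSums ma = (subsetSums m).erase m.sum := by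
    subst hma; exact h.subsetSums_eq_erase_sum ha
  have sums_b : subsetSums mb = (subsetSums m).erase m.sum := by
    subst hmb; exact h.subsetSums_eq_erase_sum hb
  have translate_a : a +ᵥ subsetSums ma = (subsetSums m).erase 0 := by
    subst hma; exact h.vadd_subsetSums_eq_erase_zero ha
  have translate_b : b +ᵥ subsetSums mb = (subsetSums m).erase 0 := by
    subst hmb; exact h.vadd_subsetSums_eq_erase_zero hb
  by_contra hne
  have sub_mem_a : b - a ∈ subsetSums ma := by
    have hb_mem : b ∈ a +ᵥ subsetSums ma := by
      rw [translate_a, ← translate_b]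
      simpa using vadd_mem_vadd_finset (a := b) (zero_mem_subsetSums mb)
    simpa [sub_eq_neg_add] using neg_vadd_mem_iff.2 hb_mem
  have sub_mem_translate_b : b - a ∈ b +ᵥ subsetSums mb := by
    rw [translate_b, mem_erase]
    exact ⟨sub_ne_zero.2 (Ne.symm hne), mem_of_mem_erase (sums_a ▸ sub_mem_a)⟩
  have neg_mem_a : -a ∈ subsetSums ma := by
    rw [sums_a, ← sums_b]
    simpa [sub_eq_add_neg] using neg_vadd_mem_iff.2 sub_mem_translate_b
  exact (hma ▸ h).neg_notMem_subsetSums neg_mem_a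

theorem eq_replicate (h : IsZeroSumFree m) (ha : a ∈ m)
    (hcard : ∀ b m', m = b ::ₘ m' → #(subsetSums m) ≤ #(subsetSums m') + 1) :
    m = Multiset.replicate m.card a := by
  refine Multiset.eq_replicate.2 ⟨rfl, fun b hb ↦ ?_⟩
  obtain ⟨ma, hma⟩ := Multiset.exists_cons_of_mem ha
  obtain ⟨mb, hmb⟩ := Multiset.exists_cons_of_mem hb
  exact eq_of_cons_eq_cons hmb hma h (hcard b mb hmb) (hcard a ma hma)

end IsZeroSumFree

end ZeroSumFree

section Behaving

/-- A multiset of positive integers with sum `S` is behaving if its nonempty subsums fill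
`{1, …, S}`; as `subsetSums` includes the empty sum, the condition reads `{0, …, S}`. -/
structure IsBehaving (s : Multiset ℕ) : Prop where
  pos : ∀ i ∈ s, 0 < i
  subsetSums_eq : subsetSums s = range (s.sum + 1)

theorem IsBehaving.cons {s : Multiset ℕ} (hs : IsBehaving s) {d : ℕ} (hd : 0 < d)
    (hds : d ≤ s.sum + 1) : IsBehaving (d ::ₘ s) where
  pos := Multiset.forall_mem_cons.2 ⟨hd, hs.pos⟩
  subsetSums_eq := by
    rw [subsetSums_cons, hs.subsetSums_eq, Multiset.sum_cons]
    ext x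
    simp only [mem_union, mem_vadd_finset, mem_range, vadd_eq_add]
    constructor
    · rintro (hx | ⟨y, hy, rfl⟩) <;> omega
    · intro hx
      rcases lt_or_ge x (s.sum + 1) with hxs | hxs
      · exact .inl hxs
      · exact .inr ⟨x - d, by omega, by omega⟩

theorem isBehaving_replicate_one (k : ℕ) : IsBehaving (Multiset.replicate k 1) := by
  induction k with
  | zero => exact ⟨by simp, subsetSums_zero⟩
  | succ k ih => exact ih.cons one_pos (Nat.le_add_left 1 _)

theorem IsBehaving.sumsetN_eq_Icc {s : List ℕ} (hs : IsBehaving (s : Multiset ℕ)) :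
    sumsetN s = Set.Icc 1 s.sum := by
  have zero_notMem : 0 ∉ sumsetN s := by
    rintro ⟨t, hts, ht, hsum⟩
    obtain ⟨i, hi⟩ := List.exists_mem_of_ne_nil t ht
    exact (hs.pos i (hts.subset hi)).ne' (List.sum_eq_zero_iff.1 hsum i hi)
  have insert_zero : insert 0 (sumsetN s) = Set.Iio (s.sum + 1) := by
    rw [← coe_range, ← Multiset.sum_coe, ← hs.subsetSums_eq]
    exact (coe_subsetSums_coe s).symm
  rw [← Set.insert_sdiff_self_of_notMem zero_notMem, insert_zero]
  ext x
  simp only [Set.mem_sdiff, Set.mem_Iio, Set.mem_singleton_iff, Set.mem_Icc]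
  omega

variable {G : Type*} [AddCommGroup G] {a b : G} {s : Multiset ℕ}

theorem IsBehaving.mem_subsetSums_map_nsmul [DecidableEq G] (hs : IsBehaving s) {x : G} :
    x ∈ subsetSums (s.map (· • a)) ↔ ∃ i ≤ s.sum, i • a = x := by
  have image_range :
      subsetSums (s.map (· • a)) = (range (s.sum + 1)).image (multiplesHom G a) := by
    rw [← hs.subsetSums_eq]
    exact subsetSums_map (multiplesHom G a) s
  simp [image_range]

theorem IsBehaving.sum_lt_addOrderOf (hs : IsBehaving s) (hz : IsZeroSumFree (s.map (· • a)))
    (ha : IsOfFinAddOrder a) : s.sum < addOrderOf a := by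
  by_contra! hle
  obtain ⟨t, hts, hsum⟩ : ∃ t ≤ s, t.sum = addOrderOf a := by
    rw [← mem_subsetSums, hs.subsetSums_eq, mem_range]
    omega
  refine hz (t.map (· • a)) (Multiset.map_le_map hts) ?_ ?_
  · rintro h0
    rw [Multiset.map_eq_zero.1 h0, Multiset.sum_zero] at hsum
    exact ha.addOrderOf_pos.ne hsum
  · rw [← Multiset.sum_smul, hsum, addOrderOf_nsmul_eq_zero]

theorem IsBehaving.exists_eq_nsmul_of_card_lt [DecidableEq G] (hs : IsBehaving s)
    (hz : IsZeroSumFree (b ::ₘ s.map (· • a)))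
    (hcard : #(subsetSums (b ::ₘ s.map (· • a))) < 2 * #(subsetSums (s.map (· • a)))) :
    ∃ d, 0 < d ∧ d ≤ s.sum ∧ d • a = b := by
  set m := s.map (· • a) with hm
  have overlap : ¬ Disjoint (subsetSums m) (b +ᵥ subsetSums m) := by
    intro hdisj
    rw [subsetSums_cons, card_union_of_disjoint hdisj, card_vadd_finset] at hcard
    omega
  obtain ⟨x, hx, hbx⟩ := not_disjoint_iff.1 overlap
  obtain ⟨y, hy, rfl⟩ := mem_vadd_finset.1 hbx
  obtain ⟨i, hi, hix⟩ := hs.mem_subsetSums_map_nsmul.1 hx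
  obtain ⟨j, hj, rfl⟩ := hs.mem_subsetSums_map_nsmul.1 hy
  rw [vadd_eq_add] at hix
  have hji : j < i := by
    by_contra! hij
    refine hz.neg_notMem_subsetSums (hs.mem_subsetSums_map_nsmul.2 ⟨j - i, by omega, ?_⟩)
    rw [sub_nsmul a hij, hix]
    abel
  refine ⟨i - j, by omega, by omega, ?_⟩
  rw [sub_nsmul a hji.le, hix]
  abel

end Behaving

section Main

variable {G : Type*} [AddCommGroup G]

theorem IsZeroSumFree.exists_isBehaving [DecidableEq G] {m : Multiset G} (hz : IsZeroSumFree m)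
    (hcard : #(subsetSums m) < 2 * m.card) :
    ∃ a ∈ m, ∃ s : Multiset ℕ, IsBehaving s ∧ m = s.map (· • a) := by
  induction m using Multiset.strongInductionOn with
  | ih m ih =>
    by_cases hdrop : ∃ b m', m = b ::ₘ m' ∧ #(subsetSums m') + 2 ≤ #(subsetSums m)
    · obtain ⟨b, m', rfl, hdrop⟩ := hdrop
      have hz' : IsZeroSumFree m' := hz.mono (Multiset.le_cons_self m' b)
      rw [Multiset.card_cons] at hcard
      obtain ⟨a, ha, s, hs, rfl⟩ := ih m' (Multiset.lt_cons_self m' b) hz' (by omega)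
      have hlower := hz'.card_lt_card_subsetSums
      obtain ⟨d, hd, hds, rfl⟩ := hs.exists_eq_nsmul_of_card_lt hz (by omega)
      exact ⟨a, Multiset.mem_cons_of_mem ha, d ::ₘ s, hs.cons hd (by omega),
        (Multiset.map_cons _ d s).symm⟩
    · obtain ⟨a, ha⟩ : ∃ a, a ∈ m := Multiset.card_pos_iff_exists_mem.1 (by omega)
      refine ⟨a, ha, Multiset.replicate m.card 1, isBehaving_replicate_one _, ?_⟩
      rw [Multiset.map_replicate, one_nsmul]
      push Not at hdrop
      exact hz.eq_replicate ha fun b m' hm ↦ Nat.le_of_lt_succ (hdrop b m' hm)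

theorem ZeroFree.zero_notMem_sumset {l : List G} (h : ZeroFree l) : 0 ∉ sumset l :=
  fun ⟨t, htl, ht, hsum⟩ ↦ h t htl ht hsum

theorem ZeroFree.card_subsetSums_coe [DecidableEq G] {l : List G} (h : ZeroFree l) :
    #(subsetSums (l : Multiset G)) = (sumset l).ncard + 1 := by
  have insert_zero : (subsetSums (l : Multiset G) : Set G) = insert 0 (sumset l) :=
    coe_subsetSums_coe l
  have hfin : (sumset l).Finite :=
    (finite_toSet (subsetSums (l : Multiset G))).subset (insert_zero ▸ Set.subset_insert _ _)
  rw [← Set.ncard_coe_finset, insert_zero, Set.ncard_insert_of_notMem h.zero_notMem_sumset hfin]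

theorem ZeroFree.ncard_sumset_lt_card [Finite G] {l : List G} (h : ZeroFree l) :
    (sumset l).ncard < Nat.card G := by
  rw [← Set.ncard_univ]
  exact Set.ncard_lt_ncard ((Set.ssubset_univ_iff).2 fun huniv ↦
    h.zero_notMem_sumset (huniv ▸ Set.mem_univ 0))

theorem stmt9_general (α : List G) (hlen : (sumset α).ncard + 1 < 2 * α.length)
    (hzf : ZeroFree α) :
    ∃ a ∈ α, ∃ s : List ℕ, (∀ x ∈ s, 0 < x) ∧ (IsOfFinAddOrder a → s.sum < addOrderOf a) ∧
      α.Perm (s.map (fun m => m • a)) ∧ sumsetN s = Set.Icc 1 s.sum := by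
  classical
  obtain ⟨a, ha, s, hs, hmap⟩ := hzf.isZeroSumFree_coe.exists_isBehaving
    (by rwa [hzf.card_subsetSums_coe, Multiset.coe_card])
  obtain ⟨s, rfl⟩ := Quotient.exists_rep s
  refine ⟨a, ha, s, hs.pos, hs.sum_lt_addOrderOf (hmap ▸ hzf.isZeroSumFree_coe), ?_,
    hs.sumsetN_eq_Icc⟩
  exact Multiset.coe_eq_coe.1 hmap

end Main

theorem stmt9 (n : ℕ) (hn : 1 < n) (α : List (ZMod n)) (hlen : n < 2 * α.length)
    (hzf : ZeroFree α) :
    ∃ a ∈ α, ∃ s : List ℕ, (∀ x ∈ s, 0 < x) ∧ s.sum < addOrderOf a ∧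
      α.Perm (s.map (fun m => m • a)) ∧ sumsetN s = Set.Icc 1 s.sum := by
  have : NeZero n := ⟨by omega⟩
  have hcard : (sumset α).ncard < n := by simpa using hzf.ncard_sumset_lt_card
  obtain ⟨a, ha, s, hpos, hord, hperm, hsum⟩ := stmt9_general α (by omega) hzf
  exact ⟨a, ha, s, hpos, hord (isOfFinAddOrder_of_finite a), hperm, hsum⟩
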